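/- Let n ≥ 2 and X ∈ GL_n(ℂ), and suppose the recursively defined sequence Y_0 = X, Y_{k+1} = X·𝛄(B_k) is defined for all k ≥ 0, i.e. each Y_k admits a factorization Y_k = B_k C_k with B_k unipotent upper-triangular and C_k invertible lower-triangular. Then for all 1 ≤ α ≤ β ≤ n, every subset I ⊆ [2,n] with |I| = β−α+1, and every integer k with k ≥ α−2 and k ≥ 0, det (Y_k)_I^{[α,β]} = det (Y_{n−2})_I^{[α,β]}. -/

import Mathlib

/-!
Let `U_k = B_{k-1}⁻¹ B_k` (with `B_{-1} = 1`). Since `𝛄` is multiplicative on unipotent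
upper-triangular matrices (`gam_mul`), `Y_{k+1} = Y_k 𝛄(U_k)`. Comparing factorizations gives
`C_k 𝛄(U_k) = U_{k+1} C_{k+1}`. If the first `k` rows of `U_k` are those of the identity, then the
first `k+1` rows of `𝛄(U_k)` are too, so the first `k+1` rows of
`U_{k+1} = C_k 𝛄(U_k) C_{k+1}⁻¹` are lower-triangular, hence again those of the identity
(`exists_step`).

Thus, for `α ≤ k + 2`, right multiplication by `𝛄(U_k)` changes a column with index in `[α, β]`
only by multiples of earlier columns with index in `[α, β]`, so no minor on these columns
changes (`minor_mul_of_closed`): these minors are constant in `k ≥ α - 2`.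
-/

open Matrix

noncomputable section

/-- The lower shift matrix `S` (ones in positions `(i+1, i)`, zeros elsewhere). -/
def shiftS (n : ℕ) : Matrix (Fin n) (Fin n) ℂ :=
  Matrix.of fun i j => if (i:ℕ) = (j:ℕ) + 1 then 1 else 0

/-- `𝛄(B) = I + S (B - I) Sᵀ`. -/
def gam {n : ℕ} (B : Matrix (Fin n) (Fin n) ℂ) : Matrix (Fin n) (Fin n) ℂ :=
  1 + shiftS n * (B - 1) * (shiftS n)ᵀ

/-- `B` is unipotent upper-triangular. -/
def UniUpper {n : ℕ} (B : Matrix (Fin n) (Fin n) ℂ) : Prop :=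
  (∀ i j : Fin n, (j:ℕ) < (i:ℕ) → B i j = 0) ∧ (∀ i, B i i = 1)

/-- `C` is invertible lower-triangular. -/
def InvLower {n : ℕ} (C : Matrix (Fin n) (Fin n) ℂ) : Prop :=
  (∀ i j : Fin n, (i:ℕ) < (j:ℕ) → C i j = 0) ∧ IsUnit C.det

/-- Determinant of the submatrix of `U` with row set `R` and column set `C` (both taken in
increasing order); `0` if the cardinalities do not match. -/
def minor {N : ℕ} (U : Matrix (Fin N) (Fin N) ℂ) (R C : Finset (Fin N)) : ℂ :=
  if h : C.card = R.card then
    Matrix.det (Matrix.of fun a b : Fin R.card =>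
      U ((R.orderIsoOfFin rfl) a).1 ((C.orderIsoOfFin h) b).1)
  else 0

/-- `{x : a ≤ x ≤ b}` as a finset of 0-based indices. -/
def seg (N a b : ℕ) : Finset (Fin N) := Finset.univ.filter fun x => a ≤ (x:ℕ) ∧ (x:ℕ) ≤ b

theorem UniUpper.blockTriangular {n : ℕ} {B : Matrix (Fin n) (Fin n) ℂ} (h : UniUpper B) :
    B.BlockTriangular id := fun i j hij => h.1 i j hij

theorem UniUpper.isUnit_det {n : ℕ} {B : Matrix (Fin n) (Fin n) ℂ} (h : UniUpper B) :
    IsUnit B.det := by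
  rw [Matrix.det_of_isUpperTriangular h.blockTriangular]
  simp [h.2]

theorem UniUpper.inv {n : ℕ} {B : Matrix (Fin n) (Fin n) ℂ} (h : UniUpper B) :
    UniUpper B⁻¹ := by
  have hu := h.isUnit_det
  have : Invertible B := Matrix.invertibleOfIsUnitDet B hu
  have ht : B⁻¹.BlockTriangular id := Matrix.blockTriangular_inv_of_blockTriangular h.blockTriangular
  refine ⟨fun i j hij => ht hij, fun i => ?_⟩
  have h1 : (B * B⁻¹) i i = 1 := by rw [Matrix.mul_nonsing_inv B hu]; simp
  rw [Matrix.mul_apply, Finset.sum_eq_single i, h.2, one_mul] at h1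
  · exact h1
  · intro j _ hji
    rcases lt_or_gt_of_ne hji with hlt | hgt
    · rw [h.1 i j hlt, zero_mul]
    · rw [show B⁻¹ j i = 0 from ht hgt, mul_zero]
  · simp

theorem UniUpper.mul {n : ℕ} {A B : Matrix (Fin n) (Fin n) ℂ} (hA : UniUpper A)
    (hB : UniUpper B) : UniUpper (A * B) := by
  refine ⟨fun i j hij => (hA.blockTriangular.mul hB.blockTriangular) hij, fun i => ?_⟩
  rw [Matrix.mul_apply, Finset.sum_eq_single i, hA.2, hB.2, one_mul]
  · intro j _ hji
    rcases lt_or_gt_of_ne hji with hlt | hgt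
    · rw [hA.1 i j hlt, zero_mul]
    · rw [hB.1 j i hgt, mul_zero]
  · simp

theorem InvLower.inv_apply {n : ℕ} {C : Matrix (Fin n) (Fin n) ℂ} (h : InvLower C)
    (i j : Fin n) (hij : (i : ℕ) < j) : C⁻¹ i j = 0 := by
  have : Invertible C := Matrix.invertibleOfIsUnitDet C h.2
  have hb : C.BlockTriangular OrderDual.toDual := fun i j hij => h.1 i j hij
  exact (Matrix.blockTriangular_inv_of_blockTriangular hb) hij

theorem shift_apply_succ {n : ℕ} (M : Matrix (Fin n) (Fin n) ℂ) (i j i' j' : Fin n)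
    (hi : (i : ℕ) = i' + 1) (hj : (j : ℕ) = j' + 1) :
    (shiftS n * M * (shiftS n)ᵀ) i j = M i' j' := by
  rw [Matrix.mul_apply, Finset.sum_eq_single j', Matrix.mul_apply, Finset.sum_eq_single i']
  · simp [shiftS, hi, hj]
  · intro x _ hx
    have : ¬ (i : ℕ) = x + 1 := fun h => hx (Fin.ext (by omega))
    simp [shiftS, this]
  · simp
  · intro x _ hx
    have : ¬ (j : ℕ) = x + 1 := fun h => hx (Fin.ext (by omega))
    simp [shiftS, this]
  · simp

theorem shift_apply_zero_left {n : ℕ} (M : Matrix (Fin n) (Fin n) ℂ) (i j : Fin n)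
    (hi : (i : ℕ) = 0) : (shiftS n * M * (shiftS n)ᵀ) i j = 0 := by
  rw [Matrix.mul_assoc, Matrix.mul_apply]
  exact Finset.sum_eq_zero fun x _ => by simp [shiftS, hi]

theorem shift_apply_zero_right {n : ℕ} (M : Matrix (Fin n) (Fin n) ℂ) (i j : Fin n)
    (hj : (j : ℕ) = 0) : (shiftS n * M * (shiftS n)ᵀ) i j = 0 := by
  rw [Matrix.mul_apply]
  exact Finset.sum_eq_zero fun x _ => by simp [shiftS, hj]

theorem UniUpper.gam {n : ℕ} {B : Matrix (Fin n) (Fin n) ℂ} (h : UniUpper B) :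
    UniUpper (gam B) := by
  have key : ∀ i j : Fin n, (j : ℕ) ≤ i → (shiftS n * (B - 1) * (shiftS n)ᵀ) i j = 0 := by
    intro i j hij
    rcases Nat.eq_zero_or_pos (j : ℕ) with hj | hj
    · exact shift_apply_zero_right _ _ _ hj
    · rw [shift_apply_succ _ i j ⟨i - 1, by omega⟩ ⟨j - 1, by omega⟩ (by simp; omega)
        (by simp; omega), Matrix.sub_apply]
      rcases hij.lt_or_eq with hlt | heq
      · rw [h.1 _ _ (by simp; omega), Matrix.one_apply_ne (by simp [Fin.ext_iff]; omega), sub_zero]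
      · obtain rfl := Fin.ext heq
        rw [h.2, Matrix.one_apply_eq, sub_self]
  constructor
  · intro i j hij
    rw [_root_.gam, Matrix.add_apply, key i j hij.le,
      Matrix.one_apply_ne (by rintro rfl; exact lt_irrefl _ hij), add_zero]
  · intro i
    rw [_root_.gam, Matrix.add_apply, key i i le_rfl, Matrix.one_apply_eq, add_zero]

/-- The map `𝛄` shifts the block of trivial rows down by one, and its own first row is trivial. -/
theorem gam_rows {n : ℕ} {U : Matrix (Fin n) (Fin n) ℂ} {k : ℕ}
    (h : ∀ i j : Fin n, (i : ℕ) < k → U i j = (1 : Matrix (Fin n) (Fin n) ℂ) i j)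
    (i j : Fin n) (hi : (i : ℕ) < k + 1) : gam U i j = (1 : Matrix (Fin n) (Fin n) ℂ) i j := by
  rw [gam, Matrix.add_apply, add_eq_left]
  rcases Nat.eq_zero_or_pos (i : ℕ) with hi0 | hi0
  · exact shift_apply_zero_left _ _ _ hi0
  rcases Nat.eq_zero_or_pos (j : ℕ) with hj | hj
  · exact shift_apply_zero_right _ _ _ hj
  rw [shift_apply_succ _ i j ⟨i - 1, by omega⟩ ⟨j - 1, by omega⟩ (by simp; omega)
    (by simp; omega), Matrix.sub_apply, h _ _ (by simp; omega), sub_self]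

/-- Multiplicativity of `𝛄`. The matrix `Sᵀ S` is the identity except that its last row vanishes,
and the last row of `B - 1` is zero, so `Sᵀ S (B - 1) = B - 1`. -/
theorem gam_mul {n : ℕ} (A : Matrix (Fin n) (Fin n) ℂ) {B : Matrix (Fin n) (Fin n) ℂ}
    (hB : UniUpper B) : gam (A * B) = gam A * gam B := by
  have key : (shiftS n)ᵀ * (shiftS n * (B - 1)) = B - 1 := by
    ext i j
    rw [Matrix.mul_apply]
    by_cases hi : (i : ℕ) + 1 < n
    · rw [Finset.sum_eq_single ⟨i + 1, hi⟩, Matrix.mul_apply, Finset.sum_eq_single i]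
      · simp [shiftS]
      · intro x _ hx
        have : ¬ (i : ℕ) = x := fun h => hx (Fin.ext h.symm)
        simp [shiftS, this]
      · simp
      · intro x _ hx
        have : ¬ (x : ℕ) = i + 1 := fun h => hx (Fin.ext h)
        simp [shiftS, this]
      · simp
    · rw [Finset.sum_eq_zero, Matrix.sub_apply]
      · rcases eq_or_ne i j with rfl | hij
        · simp [hB.2]
        · have hv : (i : ℕ) ≠ j := fun h => hij (Fin.ext h)
          rw [hB.1 i j (by omega), Matrix.one_apply_ne hij, sub_zero]
      · intro x _
        have : ¬ (x : ℕ) = i + 1 := by omega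
        simp [shiftS, this]
  have h2 : shiftS n * (A - 1) * (shiftS n)ᵀ * (shiftS n * (B - 1) * (shiftS n)ᵀ)
      = shiftS n * ((A - 1) * (B - 1)) * (shiftS n)ᵀ := by
    calc _ = shiftS n * (A - 1) * ((shiftS n)ᵀ * (shiftS n * (B - 1))) * (shiftS n)ᵀ := by
          simp only [Matrix.mul_assoc]
      _ = _ := by rw [key]; simp only [Matrix.mul_assoc]
  simp only [gam]
  rw [add_mul, mul_add, mul_add, h2]
  noncomm_ring

/-- Right multiplication by a unipotent upper-triangular matrix `G` preserves the minors on a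
column set `K` when `G x j = 0` for all `x ∉ K` and `j ∈ K`: the columns of `A * G` indexed by `K`
are then unitriangular combinations of the columns of `A` indexed by `K`. -/
theorem minor_mul_of_closed {n : ℕ} (A G : Matrix (Fin n) (Fin n) ℂ) (hG : UniUpper G)
    (R K : Finset (Fin n)) (hK : ∀ x, x ∉ K → ∀ j ∈ K, G x j = 0) :
    minor (A * G) R K = minor A R K := by
  unfold minor
  split_ifs with h
  swap
  · rfl
  set f := K.orderIsoOfFin h with hf
  have hmul : (Matrix.of fun a b : Fin R.card => (A * G) ((R.orderIsoOfFin rfl) a).1 (f b).1)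
      = (Matrix.of fun a b : Fin R.card => A ((R.orderIsoOfFin rfl) a).1 (f b).1)
        * (Matrix.of fun a b : Fin R.card => G (f a).1 (f b).1) := by
    ext a b
    simp only [Matrix.of_apply, Matrix.mul_apply]
    rw [← Finset.sum_subset (Finset.subset_univ K)
      (fun x _ hx => by rw [hK x hx _ (f b).2, mul_zero]), ← Finset.sum_coe_sort K]
    exact (Equiv.sum_comp f.toEquiv
      (fun x : K => A ((R.orderIsoOfFin rfl) a).1 x.1 * G x.1 (f b).1)).symm
  rw [hmul, Matrix.det_mul, Matrix.det_of_isUpperTriangular (M := Matrix.of fun a b => G _ _)]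
  · simp [hG.2]
  · intro a b hab
    exact hG.1 _ _ (f.strictMono hab)

/-- Consecutive terms differ by a right factor `𝛄(U)`, where `U = B_{k-1}⁻¹ B_k` (and `U = B_0` for
`k = 0`) agrees with the identity in its first `k` rows. -/
theorem exists_step {n : ℕ} (X : Matrix (Fin n) (Fin n) ℂ)
    (Y B C : ℕ → Matrix (Fin n) (Fin n) ℂ)
    (hY0 : Y 0 = X) (hfac : ∀ k, Y k = B k * C k)
    (hB : ∀ k, UniUpper (B k)) (hC : ∀ k, InvLower (C k))
    (hrec : ∀ k, Y (k+1) = X * gam (B k)) (k : ℕ) :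
    ∃ U : Matrix (Fin n) (Fin n) ℂ, UniUpper U ∧
      (∀ i j : Fin n, (i : ℕ) < k → U i j = (1 : Matrix (Fin n) (Fin n) ℂ) i j) ∧
      Y (k+1) = Y k * gam U := by
  induction k with
  | zero => exact ⟨B 0, hB 0, fun i j h => absurd h (Nat.not_lt_zero _), by rw [hrec, hY0]⟩
  | succ k ih =>
    obtain ⟨U, -, hrows, hY⟩ := ih
    have hu := (hB k).isUnit_det
    have hV : UniUpper ((B k)⁻¹ * B (k+1)) := (hB k).inv.mul (hB (k+1))
    refine ⟨(B k)⁻¹ * B (k+1), hV, ?_, ?_⟩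
    · have hEq : (B k)⁻¹ * B (k+1) = C k * gam U * (C (k+1))⁻¹ := by
        have h1 : B (k+1) * C (k+1) = B k * (C k * gam U) := by
          rw [← hfac, hY, hfac k, Matrix.mul_assoc]
        calc (B k)⁻¹ * B (k+1)
            = (B k)⁻¹ * (B (k+1) * C (k+1)) * (C (k+1))⁻¹ := by
              rw [← Matrix.mul_assoc, Matrix.mul_nonsing_inv_cancel_right _ _ (hC (k+1)).2]
          _ = _ := by rw [h1, Matrix.nonsing_inv_mul_cancel_left _ _ hu]
      intro i j hi
      rcases lt_trichotomy (i : ℕ) j with hij | hij | hij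
      · -- Row `i` of `C k * gam U` equals row `i` of `C k`: only trivial rows of `gam U` occur.
        have hrow : ∀ m : Fin n, (C k * gam U) i m = C k i m := by
          intro m
          have : (C k * gam U) i m = (C k * (1 : Matrix (Fin n) (Fin n) ℂ)) i m := by
            rw [Matrix.mul_apply, Matrix.mul_apply]
            refine Finset.sum_congr rfl fun x _ => ?_
            by_cases hx : (i : ℕ) < x
            · rw [(hC k).1 i x hx, zero_mul, zero_mul]
            · rw [gam_rows hrows x m (by omega)]
          rw [this, Matrix.mul_one]
        rw [hEq, Matrix.one_apply_ne (by rintro rfl; exact lt_irrefl _ hij), Matrix.mul_apply]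
        refine Finset.sum_eq_zero fun m _ => ?_
        rw [hrow]
        by_cases hm : (i : ℕ) < m
        · rw [(hC k).1 i m hm, zero_mul]
        · rw [(hC (k+1)).inv_apply m j (by omega), mul_zero]
      · obtain rfl := Fin.ext hij
        rw [hV.2, Matrix.one_apply_eq]
      · rw [hV.1 i j hij, Matrix.one_apply_ne (by rintro rfl; exact lt_irrefl _ hij)]
    · rw [hrec (k+1), hrec k, Matrix.mul_assoc, ← gam_mul _ hV,
        Matrix.mul_nonsing_inv_cancel_left _ _ hu]

/-- under the hypotheses of the recursion, for all `1 ≤ α ≤ β ≤ n`, every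
`I ⊆ [2, n]` with `|I| = β - α + 1` and every `k ≥ α - 2`,
`det (Y_k)_I^{[α,β]} = det (Y_{n-2})_I^{[α,β]}` (all paper indices 1-based; 0-based element `x`
stands for the paper index `x+1`). -/
theorem Yk_minor_stable (n : ℕ) (hn : 2 ≤ n) (X : Matrix (Fin n) (Fin n) ℂ) (hX : IsUnit X.det)
    (Y B C : ℕ → Matrix (Fin n) (Fin n) ℂ)
    (hY0 : Y 0 = X)
    (hfac : ∀ k, Y k = B k * C k)
    (hB : ∀ k, UniUpper (B k)) (hC : ∀ k, InvLower (C k))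
    (hrec : ∀ k, Y (k+1) = X * gam (B k))
    (α β : ℕ) (hα : 1 ≤ α) (hαβ : α ≤ β) (hβ : β ≤ n)
    (I : Finset (Fin n)) (hI2 : ∀ x ∈ I, 1 ≤ (x:ℕ)) (hIcard : I.card = β - α + 1)
    (k : ℕ) (hk : α - 2 ≤ k) :
    minor (Y k) I (seg n (α-1) (β-1)) = minor (Y (n-2)) I (seg n (α-1) (β-1)) := by
  have step : ∀ m, α - 2 ≤ m →
      minor (Y (m+1)) I (seg n (α-1) (β-1)) = minor (Y m) I (seg n (α-1) (β-1)) := by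
    intro m hm
    obtain ⟨U, hU, hrows, hY⟩ := exists_step X Y B C hY0 hfac hB hC hrec m
    rw [hY]
    refine minor_mul_of_closed _ _ hU.gam _ _ fun x hx j hj => ?_
    simp only [seg, Finset.mem_filter, Finset.mem_univ, true_and] at hx hj
    by_cases hxj : (j : ℕ) < x
    · exact hU.gam.1 x j hxj
    · rw [gam_rows hrows x j (by omega), Matrix.one_apply_ne (by rintro rfl; exact hx hj)]
  have const : ∀ m, α - 2 ≤ m →
      minor (Y m) I (seg n (α-1) (β-1)) = minor (Y (α-2)) I (seg n (α-1) (β-1)) := by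
    intro m hm
    induction m, hm using Nat.le_induction with
    | base => rfl
    | succ m hm ih => rw [step m hm, ih]
  rw [const k hk, const (n-2) (by omega)]

end
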